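/- Let X be a nontrivial real vector space, f an asymmetric norm on X with f x > 0 for every x ≠ 0 (X is T1), and let X carry the real normed space structure of the associated norm ‖x‖ = max (f x) (f (-x)). Then the dual cone X^♭ := {p : X →L[ℝ] ℝ | ∃ C ≥ 0, ∀ x, p x ≤ C * f x} is weak-star closed in the weak-star dual of X if and only if sInf {f (-x) : x ∈ X, f x = 1} > 0. -/

import Mathlib

/-!
If `c(X) > 0`, then `f` dominates a multiple of the norm, so the dual cone is the whole dual.

Conversely, the dual cone is always weak-star dense when `X` is T1: on a finite-dimensional
subspace `V` the function `f` dominates a multiple of the norm (compactness of the unit sphere), so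
the restriction of `p` to `V` is bounded by a multiple of `f`, and Hahn–Banach extends it to an
element of the dual cone (`exists_dualCone_eqOn`). Hence a weak-star closed dual cone is the whole
dual. Then every functional is bounded on `{x | f x = 1}`, and Banach–Steinhaus bounds this set in
norm, which says exactly that `f x` and `f (-x)` are comparable.
-/

/-- `f` is an asymmetric norm on the real vector space `X`. -/
def IsAsymmNorm {X : Type*} [AddCommGroup X] [Module ℝ X] (f : X → ℝ) : Prop :=
  (∀ x, 0 ≤ f x) ∧ (∀ (c : ℝ), 0 ≤ c → ∀ x, f (c • x) = c * f x) ∧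
  (∀ x y, f (x + y) ≤ f x + f y) ∧ (∀ x, f x = 0 → f (-x) = 0 → x = 0)

namespace IsAsymmNorm

variable {X : Type*} [NormedAddCommGroup X] [NormedSpace ℝ X] {f : X → ℝ}

theorem map_zero (hf : IsAsymmNorm f) : f 0 = 0 := by
  simpa using hf.2.1 0 le_rfl 0

theorem continuous (hf : IsAsymmNorm f) (hXnorm : ∀ x : X, ‖x‖ = max (f x) (f (-x))) :
    Continuous f := by
  have h (x y : X) : f x ≤ f y + 1 * dist x y := by
    have h1 := hf.2.2.1 y (x - y)
    have h2 : f (x - y) ≤ ‖x - y‖ := (hXnorm _).symm ▸ le_max_left _ _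
    rw [add_sub_cancel] at h1
    rw [dist_eq_norm]
    linarith
  exact (LipschitzWith.of_le_add_mul 1 h).continuous

/-- On a finite-dimensional subspace, `f` dominates a positive multiple of the norm. -/
theorem exists_norm_le (hf : IsAsymmNorm f) (hXnorm : ∀ x : X, ‖x‖ = max (f x) (f (-x)))
    (hT1 : ∀ x : X, x ≠ 0 → 0 < f x) (V : Submodule ℝ X) [FiniteDimensional ℝ V] :
    ∃ K ≥ (0 : ℝ), ∀ x : V, ‖x‖ ≤ K * f x := by
  have := FiniteDimensional.proper ℝ V
  rcases (Metric.sphere (0 : V) 1).eq_empty_or_nonempty with h | h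
  · refine ⟨0, le_rfl, fun x => ?_⟩
    by_contra! hx
    have hx : 0 < ‖x‖ := by simpa using hx
    have : ‖x‖⁻¹ • x ∈ Metric.sphere (0 : V) 1 := by
      rw [mem_sphere_zero_iff_norm, norm_smul, norm_inv, norm_norm, inv_mul_cancel₀ hx.ne']
    simp [h] at this
  · obtain ⟨y, hy, hmin⟩ := (isCompact_sphere (0 : V) 1).exists_isMinOn (f := fun x : V => f x) h
      ((hf.continuous hXnorm).comp continuous_subtype_val).continuousOn
    have hy0 : (y : X) ≠ 0 := by
      intro h0
      have : y = 0 := by exact_mod_cast h0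
      simp [this] at hy
    have hfy := hT1 _ hy0
    refine ⟨(f y)⁻¹, by positivity, fun x => ?_⟩
    rcases eq_or_ne x 0 with rfl | hx
    · simp [hf.map_zero]
    have hx : 0 < ‖x‖ := by simpa using hx
    have hmem : ‖x‖⁻¹ • x ∈ Metric.sphere (0 : V) 1 := by
      rw [mem_sphere_zero_iff_norm, norm_smul, norm_inv, norm_norm, inv_mul_cancel₀ hx.ne']
    have h1 : f y ≤ f ((‖x‖⁻¹ • x : V) : X) := hmin hmem
    rw [Submodule.coe_smul, hf.2.1 _ (by positivity), inv_mul_eq_div, le_div_iff₀ hx] at h1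
    rw [inv_mul_eq_div, le_div_iff₀ hfy]
    linarith

/-- Every continuous functional agrees on a given finite-dimensional subspace with an element of
the dual cone. -/
theorem exists_dualCone_eqOn (hf : IsAsymmNorm f) (hXnorm : ∀ x : X, ‖x‖ = max (f x) (f (-x)))
    (hT1 : ∀ x : X, x ≠ 0 → 0 < f x) (p : X →L[ℝ] ℝ) (V : Submodule ℝ X)
    [FiniteDimensional ℝ V] :
    ∃ q : X →L[ℝ] ℝ, (∃ C ≥ (0 : ℝ), ∀ x, q x ≤ C * f x) ∧ ∀ x ∈ V, q x = p x := by
  obtain ⟨K, hK, hKf⟩ := hf.exists_norm_le hXnorm hT1 V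
  have hC : 0 ≤ ‖p‖ * K := by positivity
  obtain ⟨g, hgV, hg⟩ := exists_extension_of_le_sublinear
    ⟨V, (p : X →ₗ[ℝ] ℝ).comp V.subtype⟩ (fun x => ‖p‖ * K * f x)
    (fun c hc x => by simp only [hf.2.1 c hc.le x]; ring)
    (fun x y => by
      have := mul_le_mul_of_nonneg_left (hf.2.2.1 x y) hC
      linarith)
    (fun x => by
      have h1 : p x ≤ ‖p‖ * ‖(x : X)‖ := (le_abs_self _).trans (p.le_opNorm x)
      have h2 := mul_le_mul_of_nonneg_left (hKf x) (norm_nonneg p)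
      calc p x ≤ ‖p‖ * ‖(x : X)‖ := h1
        _ ≤ ‖p‖ * (K * f x) := h2
        _ = ‖p‖ * K * f x := by ring)
  refine ⟨g.mkContinuous (‖p‖ * K) fun x => ?_, ⟨‖p‖ * K, hC, hg⟩, fun x hx => hgV ⟨x, hx⟩⟩
  have hx : f x ≤ ‖x‖ := (hXnorm _).symm ▸ le_max_left _ _
  have hnx : f (-x) ≤ ‖x‖ := (hXnorm _).symm ▸ le_max_right _ _
  have h1 := hg x
  have h2 := hg (-x)
  rw [_root_.map_neg] at h2
  rw [Real.norm_eq_abs, abs_le']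
  exact ⟨h1.trans (by gcongr), h2.trans (by gcongr)⟩

/-- If every continuous functional lies in the dual cone, then `{x | f x = 1}` is bounded in norm,
by Banach–Steinhaus for the evaluations on the (always complete) dual. -/
theorem exists_bound_of_forall
    (h : ∀ p : X →L[ℝ] ℝ, ∃ C ≥ (0 : ℝ), ∀ x, p x ≤ C * f x) :
    ∃ K : ℝ, 0 < K ∧ ∀ x, f x = 1 → ‖x‖ ≤ K := by
  obtain ⟨K, hK⟩ := banach_steinhaus
    (g := fun x : {x : X // f x = 1} => NormedSpace.inclusionInDoubleDual ℝ X x) (fun p => by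
      obtain ⟨C, hC, hp⟩ := h p
      obtain ⟨D, hD, hq⟩ := h (-p)
      refine ⟨max C D, fun ⟨x, hx⟩ => ?_⟩
      have h1 := hp x
      have h2 := hq x
      rw [hx, mul_one] at h1 h2
      rw [NormedSpace.dual_def, Real.norm_eq_abs, abs_le']
      exact ⟨h1.trans (le_max_left _ _), h2.trans (le_max_right _ _)⟩)
  refine ⟨max K 1, by positivity, fun x hx => ?_⟩
  have := hK ⟨x, hx⟩
  rw [← (NormedSpace.inclusionInDoubleDualLi ℝ (E := X)).norm_map x]
  exact this.trans (le_max_left _ _)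

end IsAsymmNorm

/-- For a T1 asymmetric normed space `X`: the dual cone `X^♭` is weak-star closed in
the weak-star dual of `X` iff `c(X) > 0`. -/
theorem dual_cone_weakStar_closed_iff_index_pos
    {X : Type*} [NormedAddCommGroup X] [NormedSpace ℝ X] [Nontrivial X]
    (f : X → ℝ) (hf : IsAsymmNorm f)
    (hXnorm : ∀ x : X, ‖x‖ = max (f x) (f (-x)))
    (hT1 : ∀ x : X, x ≠ 0 → 0 < f x) :
    IsClosed {p : WeakDual ℝ X | ∃ C ≥ (0 : ℝ), ∀ x, p x ≤ C * f x} ↔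
    0 < sInf ((fun x => f (-x)) '' {x | f x = 1}) := by
  have normalize (x : X) (hx : x ≠ 0) : f ((f x)⁻¹ • x) = 1 := by
    have := hT1 x hx
    rw [hf.2.1 _ (by positivity), inv_mul_cancel₀ this.ne']
  constructor
  · intro hcl
    have hall (p : X →L[ℝ] ℝ) : ∃ C ≥ (0 : ℝ), ∀ x, p x ≤ C * f x := by
      -- `q s` agrees with `p` on the finite set `s`, so `q s → p` weak-star as `s` grows.
      choose q hq hqp using fun s : Finset X =>
        hf.exists_dualCone_eqOn hXnorm hT1 p (Submodule.span ℝ (s : Set X))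
      have hlim : Filter.Tendsto (fun s => StrongDual.toWeakDual (q s)) Filter.atTop
          (nhds (StrongDual.toWeakDual p)) := by
        refine tendsto_iff_forall_eval_tendsto_topDualPairing.2 fun x => ?_
        refine tendsto_const_nhds.congr' ?_
        filter_upwards [Filter.eventually_ge_atTop {x}] with s hs
        exact (hqp s x (Submodule.subset_span (hs (by simp)))).symm
      exact hcl.mem_of_tendsto hlim (Filter.Eventually.of_forall hq)
    obtain ⟨K, hK0, hK⟩ := IsAsymmNorm.exists_bound_of_forall hall
    obtain ⟨x₀, hx₀⟩ := exists_ne (0 : X)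
    refine lt_of_lt_of_le (inv_pos.2 hK0)
      (le_csInf ⟨_, _, normalize x₀ hx₀, rfl⟩ ?_)
    rintro _ ⟨x, hx, rfl⟩
    have hx : f x = 1 := hx
    have hne : -x ≠ 0 := by
      intro h
      rw [neg_eq_zero.1 h, hf.map_zero] at hx
      exact zero_ne_one hx
    have hpos := hT1 _ hne
    -- The bound is applied to `-x` rescaled to have `f`-value one.
    have h1 := hK _ (normalize _ hne)
    have h2 : f x ≤ ‖-x‖ := by rw [norm_neg, hXnorm]; exact le_max_left _ _
    rw [norm_smul, norm_inv, Real.norm_of_nonneg hpos.le, inv_mul_eq_div, div_le_iff₀ hpos] at h1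
    change K⁻¹ ≤ f (-x)
    rw [inv_le_iff_one_le_mul₀' hK0]
    linarith
  · intro hc
    set c := sInf ((fun x => f (-x)) '' {x | f x = 1})
    have hcf (x : X) : c * f x ≤ f (-x) := by
      rcases eq_or_ne x 0 with rfl | hx
      · simp [hf.map_zero]
      have hpos := hT1 x hx
      have h1 : c ≤ f (-((f x)⁻¹ • x)) :=
        csInf_le ⟨0, by rintro _ ⟨y, -, rfl⟩; exact hf.1 _⟩ ⟨_, normalize x hx, rfl⟩
      rwa [← smul_neg, hf.2.1 _ (by positivity), inv_mul_eq_div, le_div_iff₀ hpos] at h1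
    convert isClosed_univ
    refine Set.eq_univ_of_forall fun p => ?_
    let p' : X →L[ℝ] ℝ := p
    refine ⟨‖p'‖ * max 1 c⁻¹, by positivity, fun x => ?_⟩
    have h1 : p' x ≤ ‖p'‖ * ‖x‖ := (le_abs_self _).trans (p'.le_opNorm x)
    have h2 : ‖x‖ ≤ max 1 c⁻¹ * f x := by
      rw [hXnorm, max_mul_of_nonneg _ _ (hf.1 x), one_mul]
      refine max_le_max le_rfl ?_
      have := hcf (-x)
      rw [neg_neg] at this
      rwa [inv_mul_eq_div, le_div_iff₀ hc, mul_comm]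
    calc p' x ≤ ‖p'‖ * ‖x‖ := h1
      _ ≤ ‖p'‖ * (max 1 c⁻¹ * f x) := by gcongr
      _ = ‖p'‖ * max 1 c⁻¹ * f x := by ring
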